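/- arXiv:1605.06010 — 2 statements merged into one kernel-verified Lean document; each statement's English description precedes it below -/
import Mathlib

section
/- Let (X, T) be a dynamical system and λ ∈ (0,1]. If the Zadeh extension system (𝔽^{=λ}(X), T_F|_{𝔽^{=λ}(X)}) with the levelwise metric d_∞ is mildly mixing, then (X, T) is mildly mixing. -/
open Metric Set TopologicalSpace Filter Function
open scoped Classical

variable {X Y : Type*}

/-- Extended Hausdorff metric on subsets of `X`: the usual Hausdorff distance between
two nonempty sets (or two empty sets), and `diam X` when exactly one of them is empty. -/
noncomputable def eHd (X : Type*) [MetricSpace X] (A B : Set X) : ℝ :=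
  if (A.Nonempty ∧ B.Nonempty) ∨ (A = ∅ ∧ B = ∅) then Metric.hausdorffDist A B
  else Metric.diam (Set.univ : Set X)

/-- The `α`-cut of a fuzzy set. -/
def cut (A : X → ℝ) (α : ℝ) : Set X := {x | α ≤ A x}

/-- The levelwise metric `d_∞` on fuzzy sets. -/
noncomputable def dinf [MetricSpace X] (A B : X → ℝ) : ℝ :=
  sSup {r : ℝ | ∃ α ∈ Set.Ioc (0:ℝ) 1, r = eHd X (cut A α) (cut B α)}

/-- A fuzzy set: an upper semicontinuous function into `[0,1]`. -/
def IsFuzzy [TopologicalSpace X] (A : X → ℝ) : Prop :=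
  (∀ x, A x ∈ Set.Icc (0:ℝ) 1) ∧ UpperSemicontinuous A

/-- `𝔽₀(X)`: nonempty (not identically zero) u.s.c. fuzzy sets. -/
def F0 (X : Type*) [TopologicalSpace X] : Set (X → ℝ) :=
  {A | IsFuzzy A ∧ ∃ x, A x ≠ 0}

/-- `𝔽^{=λ}(X)`: u.s.c. fuzzy sets with maximum value `λ`. -/
def Feq (X : Type*) [TopologicalSpace X] (lam : ℝ) : Set (X → ℝ) :=
  {A | IsFuzzy A ∧ (∃ x, A x = lam) ∧ ∀ x, A x ≤ lam}

/-- `𝔽^{≥λ}(X)`: u.s.c. fuzzy sets attaining a value `≥ λ`. -/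
def Fge (X : Type*) [TopologicalSpace X] (lam : ℝ) : Set (X → ℝ) :=
  {A | IsFuzzy A ∧ ∃ x, lam ≤ A x}

/-- Zadeh's extension of `T`. -/
noncomputable def zadeh (T : X → X) (A : X → ℝ) : X → ℝ :=
  fun x => sSup (A '' (T ⁻¹' {x}))

/-- The induced map `T_K` on the hyperspace of nonempty closed (= compact) subsets. -/
def hyper [TopologicalSpace X] (T : X → X) (hT : Continuous T)
    (A : NonemptyCompacts X) : NonemptyCompacts X :=
  ⟨⟨T '' A, A.isCompact.image hT⟩, A.nonempty.image T⟩

/-- Topological transitivity. -/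
def TopTrans [TopologicalSpace Y] (S : Y → Y) : Prop :=
  ∀ U V : Set Y, IsOpen U → IsOpen V → U.Nonempty → V.Nonempty →
    ∃ n : ℕ, (S^[n] '' U ∩ V).Nonempty

/-- Weak mixing: `S × S` is transitive. -/
def TopWeakMix [TopologicalSpace Y] (S : Y → Y) : Prop :=
  TopTrans (fun p : Y × Y => (S p.1, S p.2))

/-- Topological transitivity of `S` restricted to `C`, for the topology induced by the
(pseudo)metric `ρ`, phrased via metric balls. -/
def TransOn (ρ : Y → Y → ℝ) (S : Y → Y) (C : Set Y) : Prop :=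
  ∀ A ∈ C, ∀ B ∈ C, ∀ ε > 0, ∃ n : ℕ, ∃ E ∈ C, ρ E A < ε ∧ ρ (S^[n] E) B < ε

/-- Weak mixing of `S` restricted to `C`, phrased via metric balls. -/
def WeakMixOn (ρ : Y → Y → ℝ) (S : Y → Y) (C : Set Y) : Prop :=
  ∀ A₁ ∈ C, ∀ A₂ ∈ C, ∀ B₁ ∈ C, ∀ B₂ ∈ C, ∀ ε > 0, ∃ n : ℕ,
    ∃ E₁ ∈ C, ∃ E₂ ∈ C, ρ E₁ A₁ < ε ∧ ρ E₂ A₂ < ε ∧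
      ρ (S^[n] E₁) B₁ < ε ∧ ρ (S^[n] E₂) B₂ < ε


/-- Mild mixing on a topological space: `S` is weakly disjoint with every transitive
dynamical system (a compact metric space with at least two points together with a
continuous surjection). -/
def MildMixTop [TopologicalSpace Y] (S : Y → Y) : Prop :=
  ∀ (Z : Type) [MetricSpace Z] [CompactSpace Z] [Nontrivial Z] (R : Z → Z),
    Continuous R → Function.Surjective R → TopTrans R →
      TopTrans (fun p : Y × Z => (S p.1, R p.2))

/-- Mild mixing of `S` restricted to `C` (with the metric `ρ`): the product of the
subsystem with every transitive dynamical system is transitive, phrased via balls. -/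
def MildMixOn (ρ : Y → Y → ℝ) (S : Y → Y) (C : Set Y) : Prop :=
  ∀ (Z : Type) [MetricSpace Z] [CompactSpace Z] [Nontrivial Z] (R : Z → Z),
    Continuous R → Function.Surjective R → TopTrans R →
      ∀ A ∈ C, ∀ B ∈ C, ∀ z₁ z₂ : Z, ∀ ε > 0, ∃ n : ℕ, ∃ E ∈ C, ∃ w : Z,
        ρ E A < ε ∧ dist w z₁ < ε ∧ ρ (S^[n] E) B < ε ∧ dist (R^[n] w) z₂ < ε

/-!
The point `x` of `X` is represented in `𝔽^{=λ}(X)` by the fuzzy point of height `λ` at `x`, whose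
`λ`-cut is `{x}`. If `E ∈ 𝔽^{=λ}(X)` is `ε`-close to it, then the whole `λ`-cut of `E` lies within
`ε` of `x`. Choose `e` with `E e = λ`. Since `T_Fⁿ E` is at least `λ` at `Tⁿ e`, an `E` going from
near the fuzzy point at `x₁` to near the fuzzy point at `x₂` in `n` steps gives an `e` going from
near `x₁` to near `x₂` in `n` steps, along the same orbit segment of the second factor.
-/

theorem MildMixOn.mildMixTop_of_dist_le [PseudoMetricSpace X] {T : X → X} {ρ : Y → Y → ℝ}
    {S : Y → Y} {C : Set Y} (hmm : MildMixOn ρ S C) {p : X → Y} (hp : ∀ x, p x ∈ C)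
    (hdist : ∀ E ∈ C, ∃ e : X, ∀ (n : ℕ) (x : X), dist (T^[n] e) x ≤ ρ (S^[n] E) (p x)) :
    MildMixTop T := by
  rintro Z _ _ _ R hR hRs hRt U V hU hV ⟨⟨x₁, z₁⟩, hU₁⟩ ⟨⟨x₂, z₂⟩, hV₂⟩
  obtain ⟨ε₁, hε₁, hball₁⟩ := Metric.isOpen_iff.1 hU _ hU₁
  obtain ⟨ε₂, hε₂, hball₂⟩ := Metric.isOpen_iff.1 hV _ hV₂
  obtain ⟨n, E, hE, w, hE₁, hw₁, hE₂, hw₂⟩ := hmm Z R hR hRs hRt (p x₁) (hp x₁) (p x₂) (hp x₂)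
    z₁ z₂ (min ε₁ ε₂) (lt_min hε₁ hε₂)
  obtain ⟨e, he⟩ := hdist E hE
  have hstart : dist (e, w) (x₁, z₁) < min ε₁ ε₂ := max_lt ((he 0 x₁).trans_lt hE₁) hw₁
  have hend : dist (T^[n] e, R^[n] w) (x₂, z₂) < min ε₁ ε₂ :=
    max_lt ((he n x₂).trans_lt hE₂) hw₂
  have hiter : (Prod.map T R)^[n] (e, w) = (T^[n] e, R^[n] w) := by
    rw [Prod.map_iterate, Prod.map_apply]
  exact ⟨n, (T^[n] e, R^[n] w), ⟨(e, w), hball₁ (hstart.trans_le (min_le_left _ _)), hiter⟩,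
    hball₂ (hend.trans_le (min_le_right _ _))⟩

section LevelwiseMetric

variable [MetricSpace X]

theorem eHd_eq_hausdorffDist {A B : Set X} (hA : A.Nonempty) (hB : B.Nonempty) :
    eHd X A B = hausdorffDist A B :=
  if_pos (Or.inl ⟨hA, hB⟩)

variable [BoundedSpace X]

theorem eHd_le_diam_univ (A B : Set X) : eHd X A B ≤ diam (univ : Set X) := by
  unfold eHd
  split_ifs with h
  · rcases h with ⟨hA, hB⟩ | ⟨rfl, rfl⟩
    · exact (hausdorffDist_le_diam hA (.all A) hB (.all B)).trans
        (diam_mono (subset_univ _) (.all univ))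
    · rw [hausdorffDist_empty]
      exact diam_nonneg
  · exact le_rfl

theorem eHd_cut_le_dinf (A B : X → ℝ) {α : ℝ} (hα : α ∈ Ioc (0 : ℝ) 1) :
    eHd X (cut A α) (cut B α) ≤ dinf A B := by
  refine le_csSup ⟨diam (univ : Set X), ?_⟩ ⟨α, hα, rfl⟩
  rintro _ ⟨β, -, rfl⟩
  exact eHd_le_diam_univ _ _

theorem dist_le_eHd_singleton {A : Set X} {a : X} (ha : a ∈ A) (x : X) :
    dist a x ≤ eHd X A {x} := by
  have hA : A.Nonempty := ⟨a, ha⟩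
  have hx : ({x} : Set X).Nonempty := singleton_nonempty x
  rw [eHd_eq_hausdorffDist hA hx, ← infDist_singleton]
  exact infDist_le_hausdorffDist_of_mem ha
    (hausdorffEDist_ne_top_of_nonempty_of_bounded hA hx (.all A) (.all {x}))

end LevelwiseMetric

/-- The fuzzy point of height `lam` at `x`: the fuzzy set with value `lam` at `x` and `0` elsewhere.
Fuzzy points embed `X` into `𝔽^{=lam}(X)`. -/
noncomputable def fuzzyPoint (lam : ℝ) (x : X) : X → ℝ :=
  indicator {x} fun _ ↦ lam

theorem fuzzyPoint_mem_Feq [TopologicalSpace X] [T1Space X] {lam : ℝ}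
    (hlam : lam ∈ Icc (0 : ℝ) 1) (x : X) : fuzzyPoint lam x ∈ Feq X lam := by
  have hle (y : X) : fuzzyPoint lam x y ≤ lam := indicator_le_self' (fun _ _ ↦ hlam.1) y
  have hnonneg (y : X) : 0 ≤ fuzzyPoint lam x y := indicator_nonneg (fun _ _ ↦ hlam.1) y
  exact ⟨⟨fun y ↦ ⟨hnonneg y, (hle y).trans hlam.2⟩,
    isClosed_singleton.upperSemicontinuous_indicator hlam.1⟩,
    ⟨x, indicator_of_mem (mem_singleton x) _⟩, hle⟩

theorem cut_fuzzyPoint {lam α : ℝ} (hα : α ∈ Ioc 0 lam) (x : X) :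
    cut (fuzzyPoint lam x) α = {x} := by
  ext y
  by_cases hy : y = x <;> simp [cut, fuzzyPoint, hy, hα.1, hα.2]

theorem dist_le_dinf_fuzzyPoint [MetricSpace X] [BoundedSpace X] {lam : ℝ}
    (hlam : lam ∈ Ioc (0 : ℝ) 1) {E : X → ℝ} {e : X} (he : lam ≤ E e) (x : X) :
    dist e x ≤ dinf E (fuzzyPoint lam x) :=
  calc
    dist e x ≤ eHd X (cut E lam) {x} := dist_le_eHd_singleton (A := cut E lam) he x
    _ = eHd X (cut E lam) (cut (fuzzyPoint lam x) lam) := by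
      rw [cut_fuzzyPoint (right_mem_Ioc.2 hlam.1)]
    _ ≤ dinf E (fuzzyPoint lam x) := eHd_cut_le_dinf _ _ hlam

section Zadeh

variable (T : X → X) {A : X → ℝ}

theorem bddAbove_range_zadeh (hA : BddAbove (range A)) : BddAbove (range (zadeh T A)) := by
  obtain ⟨c, hc⟩ := hA
  -- Where the fibre of `T` is empty, `zadeh T A` takes the junk value `sSup ∅ = 0`.
  refine ⟨max c 0, forall_mem_range.2 fun x ↦ Real.sSup_le ?_ (le_max_right c 0)⟩
  rintro _ ⟨y, -, rfl⟩
  exact (hc (mem_range_self y)).trans (le_max_left c 0)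

theorem le_zadeh_apply (hA : BddAbove (range A)) (x : X) : A x ≤ zadeh T A (T x) :=
  le_csSup (hA.mono (image_subset_range A _)) (mem_image_of_mem A rfl)

theorem le_iterate_zadeh_apply (hA : BddAbove (range A)) (n : ℕ) (x : X) :
    A x ≤ (zadeh T)^[n] A (T^[n] x) := by
  induction n generalizing A x with
  | zero => exact le_rfl
  | succ n ih =>
    rw [iterate_succ_apply, iterate_succ_apply]
    exact (le_zadeh_apply T hA x).trans (ih (bddAbove_range_zadeh T hA) (T x))

end Zadeh

theorem mildMixing_of_zadeh_mildMixing_general [MetricSpace X] [BoundedSpace X] (T : X → X)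
    {lam : ℝ} (hlam : lam ∈ Ioc (0 : ℝ) 1) (hmm : MildMixOn dinf (zadeh T) (Feq X lam)) :
    MildMixTop T := by
  refine hmm.mildMixTop_of_dist_le (p := fuzzyPoint lam)
    (fuzzyPoint_mem_Feq (Ioc_subset_Icc_self hlam)) ?_
  rintro E ⟨-, ⟨e, he⟩, hle⟩
  have hbdd : BddAbove (range E) := ⟨lam, forall_mem_range.2 hle⟩
  exact ⟨e, fun n ↦ dist_le_dinf_fuzzyPoint hlam
    (he.ge.trans (le_iterate_zadeh_apply T hbdd n e))⟩

/-- If the Zadeh extension restricted to `𝔽^{=λ}(X)` is mildly mixing, then `(X,T)`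
is mildly mixing. -/
theorem mildMixing_of_zadeh_mildMixing {X : Type*} [MetricSpace X] [CompactSpace X] [Nontrivial X]
    (T : X → X) (hT : Continuous T) (hTs : Function.Surjective T)
    (lam : ℝ) (hlam : lam ∈ Set.Ioc (0:ℝ) 1)
    (hmm : MildMixOn dinf (zadeh T) (Feq X lam)) :
    MildMixTop T :=
  mildMixing_of_zadeh_mildMixing_general T hlam hmm
end

section
/- Let (X, T) be a dynamical system and 𝐚 = (a₁, …, a_n) ∈ ℕⁿ. The following statements are equivalent: (1) (X, T) is weakly mixing and 𝐚-transitive; (2) (K(X), T_K) is 𝐚-transitive; (3) for every λ ∈ (0,1], (𝔽^{=λ}(X), T_F|_{𝔽^{=λ}(X)}) is 𝐚-transitive; (4) there exists λ ∈ (0,1] such that (𝔽^{=λ}(X), T_F|_{𝔽^{=λ}(X)}) is 𝐚-transitive. -/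
open Metric Set TopologicalSpace Filter Function
open scoped Classical

variable {X Y : Type*}

/-- `𝐚`-transitivity (multi-transitivity with respect to the vector `a`) on a
topological space: the product system `S^{a₁} × ⋯ × S^{a_n}` is transitive. -/
def MultiTransTop [TopologicalSpace Y] {n : ℕ} (a : Fin n → ℕ) (S : Y → Y) : Prop :=
  TopTrans (fun f : Fin n → Y => fun i => S^[a i] (f i))

/-- `𝐚`-transitivity of `S` restricted to `C`, phrased via metric balls. -/
def MultiTransOn {n : ℕ} (a : Fin n → ℕ) (ρ : Y → Y → ℝ) (S : Y → Y) (C : Set Y) : Prop :=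
  ∀ A : Fin n → Y, (∀ i, A i ∈ C) → ∀ B : Fin n → Y, (∀ i, B i ∈ C) → ∀ ε > 0,
    ∃ m : ℕ, ∃ E : Fin n → Y, ∀ i, E i ∈ C ∧ ρ (E i) (A i) < ε ∧
      ρ ((S^[a i])^[m] (E i)) (B i) < ε

/-! If `T` is weakly mixing, the sets `N(U, V)` of times `k` with `Tᵏ(U) ∩ V ≠ ∅` form a filter base
(Furstenberg), so `𝐚`-transitivity lets finitely many targets be hit at once in each coordinate.
Given fuzzy sets `A`, `B` of maximum `λ`, choose finite nets `P`, `Q` adapted to their cuts and a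
time `k` at which, for all `(p, q) ∈ P × Q`, some `z p q` near `p` is moved by `Tᵏ` near `q`. The
Zadeh image under `z` of the fuzzy set `(p, q) ↦ min (A p) (B q)` on `P × Q` is then close to `A`,
and its `k`-th iterate is close to `B`.

The `λ`-cut is a nonexpansive surjection from `𝔽^{=λ}(X)` to `K(X)` intertwining the two induced
maps, so `𝐚`-transitivity descends to `K(X)`.

A compact set contained in `U` whose image meets both `V` and `W` shows that `N(U, V)` and `N(U, W)`
have a common element; by an argument of Petersen this already implies weak mixing. -/

/-- The set `N(U, V)` of times at which the orbit of some point of `U` visits `V`. -/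
def hitTimes (T : X → X) (U V : Set X) : Set ℕ :=
  {k | ∃ x ∈ U, T^[k] x ∈ V}

lemma hitTimes_mono {T : X → X} {U U' V V' : Set X} (hU : U ⊆ U') (hV : V ⊆ V') :
    hitTimes T U V ⊆ hitTimes T U' V' :=
  fun _ ⟨x, hx, hkx⟩ => ⟨x, hU hx, hV hkx⟩

lemma hitTimes_preimage_iterate_subset (T : X → X) (k : ℕ) (U V : Set X) :
    hitTimes T (T^[k] ⁻¹' U) (T^[k] ⁻¹' V) ⊆ hitTimes T U V := by
  rintro m ⟨x, hxU, hxV⟩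
  exact ⟨T^[k] x, hxU, by rwa [← iterate_add_apply, add_comm, iterate_add_apply]⟩

lemma iterate_pi_apply {ι : Type*} (a : ι → ℕ) (S : Y → Y) (m : ℕ) (f : ι → Y) (i : ι) :
    (fun (f : ι → Y) i => S^[a i] (f i))^[m] f i = S^[a i * m] (f i) := by
  induction m generalizing f with
  | zero => simp
  | succ m ih => rw [iterate_succ_apply, ih, Nat.mul_succ, iterate_add_apply]

section Transitivity

variable [TopologicalSpace X] {T : X → X}

lemma topWeakMix_iff_hitTimes_inter_nonempty :
    TopWeakMix T ↔ ∀ U₁ V₁ U₂ V₂ : Set X, IsOpen U₁ → IsOpen V₁ → IsOpen U₂ → IsOpen V₂ →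
      U₁.Nonempty → V₁.Nonempty → U₂.Nonempty → V₂.Nonempty →
        (hitTimes T U₁ V₁ ∩ hitTimes T U₂ V₂).Nonempty := by
  have iterate_prod (k : ℕ) (p : X × X) :
      (fun p : X × X => (T p.1, T p.2))^[k] p = (T^[k] p.1, T^[k] p.2) :=
    congrFun (Prod.map_iterate T T k) p
  constructor
  · intro h U₁ V₁ U₂ V₂ hU₁ hV₁ hU₂ hV₂ neU₁ neV₁ neU₂ neV₂
    obtain ⟨k, _, ⟨p, hp, rfl⟩, hkp⟩ := h (U₁ ×ˢ U₂) (V₁ ×ˢ V₂) (hU₁.prod hU₂) (hV₁.prod hV₂)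
      (neU₁.prod neU₂) (neV₁.prod neV₂)
    rw [iterate_prod] at hkp
    exact ⟨k, ⟨p.1, hp.1, hkp.1⟩, ⟨p.2, hp.2, hkp.2⟩⟩
  · rintro h U V hU hV ⟨⟨u₁, u₂⟩, hu⟩ ⟨⟨v₁, v₂⟩, hv⟩
    obtain ⟨U₁, U₂, hU₁, hU₂, hu₁, hu₂, hU₁₂⟩ := isOpen_prod_iff.1 hU u₁ u₂ hu
    obtain ⟨V₁, V₂, hV₁, hV₂, hv₁, hv₂, hV₁₂⟩ := isOpen_prod_iff.1 hV v₁ v₂ hv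
    obtain ⟨k, ⟨x, hx, hkx⟩, ⟨y, hy, hky⟩⟩ := h U₁ V₁ U₂ V₂ hU₁ hV₁ hU₂ hV₂
      ⟨u₁, hu₁⟩ ⟨v₁, hv₁⟩ ⟨u₂, hu₂⟩ ⟨v₂, hv₂⟩
    refine ⟨k, _, ⟨(x, y), hU₁₂ ⟨hx, hy⟩, rfl⟩, hV₁₂ ?_⟩
    rw [iterate_prod]
    exact ⟨hkx, hky⟩

lemma multiTransTop_iff_exists_forall_mem_hitTimes {n : ℕ} {a : Fin n → ℕ} :
    MultiTransTop a T ↔ ∀ U V : Fin n → Set X, (∀ i, IsOpen (U i)) → (∀ i, IsOpen (V i)) →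
      (∀ i, (U i).Nonempty) → (∀ i, (V i).Nonempty) →
        ∃ m, ∀ i, a i * m ∈ hitTimes T (U i) (V i) := by
  constructor
  · intro h U V hU hV neU neV
    obtain ⟨m, _, ⟨f, hf, rfl⟩, hmf⟩ := h (univ.pi U) (univ.pi V)
      (isOpen_set_pi finite_univ fun i _ => hU i) (isOpen_set_pi finite_univ fun i _ => hV i)
      (univ_pi_nonempty_iff.2 neU) (univ_pi_nonempty_iff.2 neV)
    refine ⟨m, fun i => ⟨f i, hf i (mem_univ i), ?_⟩⟩
    rw [← iterate_pi_apply]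
    exact hmf i (mem_univ i)
  · rintro h U V hU hV ⟨u, hu⟩ ⟨v, hv⟩
    obtain ⟨U', hU', hU'U⟩ := isOpen_pi_iff'.1 hU u hu
    obtain ⟨V', hV', hV'V⟩ := isOpen_pi_iff'.1 hV v hv
    obtain ⟨m, hm⟩ := h U' V' (fun i => (hU' i).1) (fun i => (hV' i).1)
      (fun i => ⟨u i, (hU' i).2⟩) (fun i => ⟨v i, (hV' i).2⟩)
    choose f hf hmf using hm
    refine ⟨m, _, ⟨f, hU'U fun i _ => hf i, rfl⟩, hV'V fun i _ => ?_⟩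
    rw [iterate_pi_apply]
    exact hmf i

lemma TopWeakMix.exists_hitTimes_subset_inter (hT : Continuous T) (h : TopWeakMix T)
    {U₁ V₁ U₂ V₂ : Set X} (hU₁ : IsOpen U₁) (hV₁ : IsOpen V₁) (hU₂ : IsOpen U₂) (hV₂ : IsOpen V₂)
    (neU₁ : U₁.Nonempty) (neV₁ : V₁.Nonempty) (neU₂ : U₂.Nonempty) (neV₂ : V₂.Nonempty) :
    ∃ U V : Set X, IsOpen U ∧ IsOpen V ∧ U.Nonempty ∧ V.Nonempty ∧
      hitTimes T U V ⊆ hitTimes T U₁ V₁ ∩ hitTimes T U₂ V₂ := by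
  obtain ⟨k, ⟨x, hx, hkx⟩, ⟨y, hy, hky⟩⟩ := topWeakMix_iff_hitTimes_inter_nonempty.1 h
    U₁ U₂ V₁ V₂ hU₁ hU₂ hV₁ hV₂ neU₁ neU₂ neV₁ neV₂
  exact ⟨U₁ ∩ T^[k] ⁻¹' U₂, V₁ ∩ T^[k] ⁻¹' V₂, hU₁.inter (hU₂.preimage (hT.iterate k)),
    hV₁.inter (hV₂.preimage (hT.iterate k)), ⟨x, hx, hkx⟩, ⟨y, hy, hky⟩,
    subset_inter (hitTimes_mono inter_subset_left inter_subset_left)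
      ((hitTimes_mono inter_subset_right inter_subset_right).trans
        (hitTimes_preimage_iterate_subset T k U₂ V₂))⟩

lemma TopWeakMix.exists_hitTimes_subset_of_finset {ι : Type*} (hT : Continuous T)
    (h : TopWeakMix T) {U V : ι → Set X} (hU : ∀ j, IsOpen (U j)) (hV : ∀ j, IsOpen (V j))
    (neU : ∀ j, (U j).Nonempty) (neV : ∀ j, (V j).Nonempty) {s : Finset ι} (hs : s.Nonempty) :
    ∃ U' V' : Set X, IsOpen U' ∧ IsOpen V' ∧ U'.Nonempty ∧ V'.Nonempty ∧
      ∀ j ∈ s, hitTimes T U' V' ⊆ hitTimes T (U j) (V j) := by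
  induction hs using Finset.Nonempty.cons_induction with
  | singleton j =>
    refine ⟨U j, V j, hU j, hV j, neU j, neV j, fun l hl => ?_⟩
    rw [Finset.mem_singleton.1 hl]
  | cons j s _ _ ih =>
    obtain ⟨U₁, V₁, hU₁, hV₁, neU₁, neV₁, hsub₁⟩ := ih
    obtain ⟨U', V', hU', hV', neU', neV', hsub⟩ :=
      h.exists_hitTimes_subset_inter hT (hU j) (hV j) hU₁ hV₁ (neU j) (neV j) neU₁ neV₁
    rw [subset_inter_iff] at hsub
    refine ⟨U', V', hU', hV', neU', neV', fun l hl => ?_⟩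
    rcases Finset.mem_cons.1 hl with rfl | hl
    · exact hsub.1
    · exact hsub.2.trans (hsub₁ l hl)

lemma MultiTransTop.exists_forall_finset_mem_hitTimes {ι : Type*} {n : ℕ} {a : Fin n → ℕ}
    (h : MultiTransTop a T) (hT : Continuous T) (hmix : TopWeakMix T) {U V : ι → Set X}
    (hU : ∀ j, IsOpen (U j)) (hV : ∀ j, IsOpen (V j)) (neU : ∀ j, (U j).Nonempty)
    (neV : ∀ j, (V j).Nonempty) {s : Fin n → Finset ι} (hs : ∀ i, (s i).Nonempty) :
    ∃ m, ∀ i, ∀ j ∈ s i, a i * m ∈ hitTimes T (U j) (V j) := by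
  choose U' V' hU' hV' neU' neV' hsub using
    fun i => hmix.exists_hitTimes_subset_of_finset hT hU hV neU neV (hs i)
  obtain ⟨m, hm⟩ := multiTransTop_iff_exists_forall_mem_hitTimes.1 h U' V' hU' hV' neU' neV'
  exact ⟨m, fun i j hj => hsub i j hj (hm i)⟩

lemma denseRange_or_preirreducibleSpace_of_hitTimes
    (h : ∀ U V W : Set X, IsOpen U → IsOpen V → IsOpen W → U.Nonempty → V.Nonempty → W.Nonempty →
      (hitTimes T U V ∩ hitTimes T U W).Nonempty) :
    DenseRange T ∨ PreirreducibleSpace X := by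
  refine or_iff_not_imp_left.2 fun hdense => ⟨?_⟩
  rw [DenseRange, dense_iff_inter_open] at hdense
  push Not at hdense
  obtain ⟨V, hV, neV, hVT⟩ := hdense
  rintro U W hU hW ⟨u, -, hu⟩ ⟨w, -, hw⟩
  obtain ⟨k, ⟨x, -, hxV⟩, ⟨y, hyU, hyW⟩⟩ := h U V W hU hV hW ⟨u, hu⟩ neV ⟨w, hw⟩
  -- A point outside `range T` is only reached at time `0`.
  cases k with
  | zero => exact ⟨y, mem_univ y, hyU, hyW⟩
  | succ k =>
    rw [iterate_succ_apply'] at hxV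
    exact (hVT.subset ⟨hxV, mem_range_self _⟩).elim

lemma preimage_iterate_nonempty_of_denseRange (hT : Continuous T) (hdense : DenseRange T)
    {V : Set X} (hV : IsOpen V) (neV : V.Nonempty) (k : ℕ) : (T^[k] ⁻¹' V).Nonempty := by
  induction k with
  | zero => exact neV
  | succ k ih => exact hdense.exists_mem_open (hV.preimage (hT.iterate k)) ih

lemma topWeakMix_of_hitTimes_inter_nonempty (hT : Continuous T)
    (h : ∀ U V W : Set X, IsOpen U → IsOpen V → IsOpen W → U.Nonempty → V.Nonempty → W.Nonempty →
      (hitTimes T U V ∩ hitTimes T U W).Nonempty) : TopWeakMix T := by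
  rw [topWeakMix_iff_hitTimes_inter_nonempty]
  intro U₁ V₁ U₂ V₂ hU₁ hV₁ hU₂ hV₂ neU₁ neV₁ neU₂ neV₂
  rcases denseRange_or_preirreducibleSpace_of_hitTimes h with hdense | _
  · obtain ⟨k, ⟨x, hx, hkx⟩, -⟩ := h U₁ U₂ U₂ hU₁ hU₂ hU₂ neU₁ neU₂ neU₂
    obtain ⟨m, hm₁, hm₂⟩ := h (U₁ ∩ T^[k] ⁻¹' U₂) V₁ (T^[k] ⁻¹' V₂)
      (hU₁.inter (hU₂.preimage (hT.iterate k))) hV₁ (hV₂.preimage (hT.iterate k)) ⟨x, hx, hkx⟩ neV₁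
      (preimage_iterate_nonempty_of_denseRange hT hdense hV₂ neV₂ k)
    exact ⟨m, hitTimes_mono inter_subset_left Subset.rfl hm₁,
      hitTimes_preimage_iterate_subset T k U₂ V₂ (hitTimes_mono inter_subset_right Subset.rfl hm₂)⟩
  · exact ⟨0, nonempty_preirreducible_inter hU₁ hV₁ neU₁ neV₁,
      nonempty_preirreducible_inter hU₂ hV₂ neU₂ neV₂⟩

end Transitivity

lemma MultiTransOn.multiTransTop [PseudoMetricSpace Y] {n : ℕ} {a : Fin n → ℕ} {S : Y → Y}
    (h : MultiTransOn a dist S univ) : MultiTransTop a S := by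
  rintro U V hU hV ⟨A, hA⟩ ⟨B, hB⟩
  obtain ⟨εU, hεU, hballU⟩ := Metric.isOpen_iff.1 hU A hA
  obtain ⟨εV, hεV, hballV⟩ := Metric.isOpen_iff.1 hV B hB
  obtain ⟨m, E, hE⟩ := h A (fun _ => mem_univ _) B (fun _ => mem_univ _) (min εU εV)
    (lt_min hεU hεV)
  refine ⟨m, _, ⟨E, hballU ?_, rfl⟩, hballV ?_⟩
  · exact (dist_pi_lt_iff hεU).2 fun i => (hE i).2.1.trans_le (min_le_left _ _)
  · refine (dist_pi_lt_iff hεV).2 fun i => ?_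
    rw [iterate_pi_apply, iterate_mul]
    exact (hE i).2.2.trans_le (min_le_right _ _)

section Hyperspace

variable [TopologicalSpace X] {T : X → X} {n : ℕ} {a : Fin n → ℕ}

lemma coe_hyper_iterate (hT : Continuous T) (k : ℕ) (K : NonemptyCompacts X) :
    ((hyper T hT)^[k] K : Set X) = T^[k] '' K := by
  have hsemi : Semiconj ((↑) : NonemptyCompacts X → Set X) (hyper T hT) (image T) := fun _ => rfl
  rw [image_iterate_eq]
  exact hsemi.iterate_right k K

lemma exists_forall_mem_hitTimes_inter_of_hyper (hT : Continuous T)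
    (h : MultiTransTop a (hyper T hT)) {U V W : Fin n → Set X} (hU : ∀ i, IsOpen (U i))
    (hV : ∀ i, IsOpen (V i)) (hW : ∀ i, IsOpen (W i)) (neU : ∀ i, (U i).Nonempty)
    (neV : ∀ i, (V i).Nonempty) (neW : ∀ i, (W i).Nonempty) :
    ∃ m, ∀ i, a i * m ∈ hitTimes T (U i) (V i) ∩ hitTimes T (U i) (W i) := by
  choose u hu using neU
  choose v hv using neV
  choose w hw using neW
  obtain ⟨m, hm⟩ := multiTransTop_iff_exists_forall_mem_hitTimes.1 h
    (fun i => {K | (K : Set X) ⊆ U i})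
    (fun i => {K | ((K : Set X) ∩ V i).Nonempty} ∩ {K | ((K : Set X) ∩ W i).Nonempty})
    (fun i => NonemptyCompacts.isOpen_subsets_of_isOpen (hU i))
    (fun i => (NonemptyCompacts.isOpen_inter_nonempty_of_isOpen (hV i)).inter
      (NonemptyCompacts.isOpen_inter_nonempty_of_isOpen (hW i)))
    (fun i => ⟨{u i}, by simpa using hu i⟩)
    (fun i => ⟨{v i} ⊔ {w i}, ⟨v i, by simp, hv i⟩, ⟨w i, by simp, hw i⟩⟩)
  refine ⟨m, fun i => ?_⟩
  obtain ⟨K, hKU, hKV, hKW⟩ := hm i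
  simp only [mem_ofPred_eq, coe_hyper_iterate] at hKV hKW
  obtain ⟨_, ⟨x, hx, rfl⟩, hxV⟩ := hKV
  obtain ⟨_, ⟨y, hy, rfl⟩, hyW⟩ := hKW
  exact ⟨⟨x, hKU hx, hxV⟩, ⟨y, hKU hy, hyW⟩⟩

lemma MultiTransTop.of_hyper (hT : Continuous T) (h : MultiTransTop a (hyper T hT)) :
    MultiTransTop a T := by
  rw [multiTransTop_iff_exists_forall_mem_hitTimes]
  intro U V hU hV neU neV
  obtain ⟨m, hm⟩ := exists_forall_mem_hitTimes_inter_of_hyper hT h hU hV hV neU neV neV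
  exact ⟨m, fun i => (hm i).1⟩

lemma TopWeakMix.of_multiTransTop_hyper (hT : Continuous T) (hn : 0 < n)
    (h : MultiTransTop a (hyper T hT)) : TopWeakMix T := by
  refine topWeakMix_of_hitTimes_inter_nonempty hT fun U V W hU hV hW neU neV neW => ?_
  obtain ⟨m, hm⟩ := exists_forall_mem_hitTimes_inter_of_hyper hT h (fun _ => hU) (fun _ => hV)
    (fun _ => hW) (fun _ => neU) (fun _ => neV) (fun _ => neW)
  exact ⟨_, hm ⟨0, hn⟩⟩

end Hyperspace

section FuzzySets

variable [TopologicalSpace X] {A : X → ℝ} {α lam : ℝ}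

lemma isFuzzy_of_isClosed_cut (hmem : ∀ x, A x ∈ Icc (0 : ℝ) 1)
    (hclosed : ∀ α, 0 < α → IsClosed (cut A α)) : IsFuzzy A := by
  refine ⟨hmem, upperSemicontinuous_iff_isClosed_preimage.2 fun α => ?_⟩
  rcases lt_or_ge 0 α with hα | hα
  · exact hclosed α hα
  · have huniv : A ⁻¹' Ici α = univ := eq_univ_of_forall fun x => hα.trans (hmem x).1
    exact huniv ▸ isClosed_univ

lemma IsFuzzy.isClosed_cut (h : IsFuzzy A) (α : ℝ) : IsClosed (cut A α) :=
  h.2.isClosed_preimage α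

lemma cut_nonempty_of_mem_Feq (hA : A ∈ Feq X lam) (hα : α ≤ lam) : (cut A α).Nonempty :=
  let ⟨x, hx⟩ := hA.2.1
  ⟨x, hα.trans hx.ge⟩

lemma cut_eq_empty_of_mem_Feq (hA : A ∈ Feq X lam) (hα : lam < α) : cut A α = ∅ :=
  eq_empty_of_forall_notMem fun x hx => (hα.trans_le hx).not_ge (hA.2.2 x)

lemma indicator_const_mem_Feq {K : Set X} (hlam : lam ∈ Ioc (0 : ℝ) 1) (hK : IsClosed K)
    (hne : K.Nonempty) : K.indicator (fun _ => lam) ∈ Feq X lam := by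
  have hle (x : X) : K.indicator (fun _ => lam) x ≤ lam :=
    indicator_le_self' (fun _ _ => hlam.1.le) x
  obtain ⟨x, hx⟩ := hne
  exact ⟨⟨fun y => ⟨indicator_nonneg (fun _ _ => hlam.1.le) y, (hle y).trans hlam.2⟩,
    hK.upperSemicontinuous_indicator hlam.1.le⟩, ⟨x, indicator_of_mem hx _⟩, hle⟩

end FuzzySets

lemma cut_indicator_const (K : Set X) {lam : ℝ} (hlam : 0 < lam) :
    cut (K.indicator fun _ => lam) lam = K := by
  ext x
  by_cases hx : x ∈ K <;> simp [cut, hx, hlam]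

section ZadehExtension

variable {ι : Type*}

/-- Zadeh's extension of a map between two possibly different spaces; `zadeh` is the case of a
self-map. As there, the value is the junk value `sSup ∅ = 0` off the range of `f`. -/
noncomputable def zadehMap (f : ι → X) (A : ι → ℝ) : X → ℝ :=
  fun x => sSup (A '' (f ⁻¹' {x}))

lemma zadehMap_le {f : ι → X} {A : ι → ℝ} {r : ℝ} (hr : 0 ≤ r) (hA : ∀ j, A j ≤ r) (x : X) :
    zadehMap f A x ≤ r :=
  Real.sSup_le (forall_mem_image.2 fun j _ => hA j) hr

variable [TopologicalSpace ι] [CompactSpace ι] [TopologicalSpace X] {f : ι → X} {A : ι → ℝ}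

lemma cut_zadehMap [T1Space X] (hf : Continuous f) (hA : UpperSemicontinuous A) {α : ℝ}
    (hα : 0 < α) : cut (zadehMap f A) α = f '' cut A α := by
  ext x
  have hcompact : IsCompact (f ⁻¹' {x}) := (isClosed_singleton.preimage hf).isCompact
  constructor
  · intro hx
    have hne : (f ⁻¹' {x}).Nonempty := by
      by_contra hempty
      have hzero : zadehMap f A x = 0 := by
        simp [zadehMap, not_nonempty_iff_eq_empty.1 hempty]
      exact hα.not_ge (hzero ▸ hx)
    obtain ⟨j, hj, hmax⟩ :=
      UpperSemicontinuousOn.exists_isMaxOn hne hcompact (hA.upperSemicontinuousOn _)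
    exact ⟨j, hx.trans (csSup_le (hne.image A) (forall_mem_image.2 hmax)), hj⟩
  · rintro ⟨j, hj, rfl⟩
    have hbdd := (hA.upperSemicontinuousOn _).bddAbove_of_isCompact hcompact
    exact hj.trans (le_csSup hbdd (mem_image_of_mem A rfl))

lemma IsFuzzy.zadehMap [T2Space X] (hf : Continuous f) (hA : IsFuzzy A) :
    IsFuzzy (zadehMap f A) := by
  refine isFuzzy_of_isClosed_cut (fun x => ⟨?_, zadehMap_le zero_le_one (fun j => (hA.1 j).2) x⟩) ?_
  · exact Real.sSup_nonneg (forall_mem_image.2 fun j _ => (hA.1 j).1)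
  · intro α hα
    rw [cut_zadehMap hf hA.2 hα]
    exact ((hA.isClosed_cut α).isCompact.image hf).isClosed

lemma zadehMap_mem_Feq [T2Space X] (hf : Continuous f) {lam : ℝ} (hlam : 0 < lam)
    (hA : A ∈ Feq ι lam) : zadehMap f A ∈ Feq X lam := by
  have hle := zadehMap_le (f := f) hlam.le hA.2.2
  have hne : (cut (zadehMap f A) lam).Nonempty := by
    rw [cut_zadehMap hf hA.1.2 hlam]
    exact (cut_nonempty_of_mem_Feq hA le_rfl).image f
  exact ⟨hA.1.zadehMap hf, hne.imp fun x hx => (hle x).antisymm hx, hle⟩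

end ZadehExtension

section ZadehIterates

variable [TopologicalSpace X] [CompactSpace X] [T2Space X] {T : X → X} {A : X → ℝ} {lam : ℝ}

lemma zadeh_iterate_mem_Feq (hT : Continuous T) (hlam : 0 < lam) (hA : A ∈ Feq X lam) (k : ℕ) :
    (zadeh T)^[k] A ∈ Feq X lam :=
  MapsTo.iterate (fun _ => zadehMap_mem_Feq hT hlam) k hA

lemma cut_zadeh_iterate (hT : Continuous T) (hA : IsFuzzy A) {α : ℝ} (hα : 0 < α) (k : ℕ) :
    cut ((zadeh T)^[k] A) α = T^[k] '' cut A α := by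
  induction k generalizing A with
  | zero => simp
  | succ k ih =>
    have hfuzzy : IsFuzzy (zadeh T A) := hA.zadehMap hT
    have hcut : cut (zadeh T A) α = T '' cut A α := cut_zadehMap hT hA.2 hα
    rw [iterate_succ_apply, ih hfuzzy, hcut, iterate_succ, image_comp]

end ZadehIterates

section LevelwiseMetric

variable [MetricSpace X] {A B : X → ℝ} {α lam r : ℝ}

lemma eHd_le_diam [CompactSpace X] (K L : Set X) : eHd X K L ≤ diam (univ : Set X) := by
  unfold eHd
  split_ifs with h
  · rcases h with ⟨hK, hL⟩ | ⟨rfl, rfl⟩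
    · exact (hausdorffDist_le_diam hK isBounded_of_compactSpace hL isBounded_of_compactSpace).trans
        (diam_mono (subset_univ _) isBounded_of_compactSpace)
    · rw [hausdorffDist_empty']
      exact diam_nonneg
  · exact le_rfl

lemma hausdorffDist_cut_le_dinf [CompactSpace X] (hα : α ∈ Ioc (0 : ℝ) 1)
    (hA : (cut A α).Nonempty) (hB : (cut B α).Nonempty) :
    hausdorffDist (cut A α) (cut B α) ≤ dinf A B := by
  have hbdd : BddAbove {r | ∃ α ∈ Ioc (0 : ℝ) 1, r = eHd X (cut A α) (cut B α)} :=
    ⟨diam univ, by rintro _ ⟨β, -, rfl⟩; exact eHd_le_diam _ _⟩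
  exact le_csSup hbdd ⟨α, hα, (if_pos (.inl ⟨hA, hB⟩)).symm⟩

lemma dinf_le_of_mem_Feq (hlam : 0 < lam) (hA : A ∈ Feq X lam) (hB : B ∈ Feq X lam)
    (h : ∀ α ∈ Ioc 0 lam, hausdorffDist (cut A α) (cut B α) ≤ r) : dinf A B ≤ r := by
  refine csSup_le ⟨_, 1, by simp, rfl⟩ ?_
  rintro _ ⟨α, hα, rfl⟩
  rcases le_or_gt α lam with hle | hlt
  · rw [eHd, if_pos (.inl ⟨cut_nonempty_of_mem_Feq hA hle, cut_nonempty_of_mem_Feq hB hle⟩)]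
    exact h α ⟨hα.1, hle⟩
  · have hA' := cut_eq_empty_of_mem_Feq hA hlt
    have hB' := cut_eq_empty_of_mem_Feq hB hlt
    rw [eHd, if_pos (.inr ⟨hA', hB'⟩), hA', hausdorffDist_empty']
    exact hausdorffDist_nonneg.trans (h lam ⟨hlam, le_rfl⟩)

end LevelwiseMetric

lemma multiTransTop_hyper_of_multiTransOn_zadeh [MetricSpace X] [CompactSpace X] {T : X → X}
    (hT : Continuous T) {n : ℕ} {a : Fin n → ℕ} {lam : ℝ} (hlam : lam ∈ Ioc (0 : ℝ) 1)
    (h : MultiTransOn a dinf (zadeh T) (Feq X lam)) : MultiTransTop a (hyper T hT) := by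
  refine MultiTransOn.multiTransTop fun K _ L _ ε hε => ?_
  have indicator_mem (K : NonemptyCompacts X) : (K : Set X).indicator (fun _ => lam) ∈ Feq X lam :=
    indicator_const_mem_Feq hlam K.isCompact.isClosed K.nonempty
  obtain ⟨m, E, hE⟩ := h _ (fun i => indicator_mem (K i)) _ (fun i => indicator_mem (L i)) ε hε
  have hdist {F : X → ℝ} (hF : F ∈ Feq X lam) (M : NonemptyCompacts X) :
      hausdorffDist (cut F lam) M ≤ dinf F ((M : Set X).indicator fun _ => lam) := by
    simpa only [cut_indicator_const _ hlam.1] using hausdorffDist_cut_le_dinf hlam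
      (cut_nonempty_of_mem_Feq hF le_rfl) (cut_nonempty_of_mem_Feq (indicator_mem M) le_rfl)
  let topCut (i : Fin n) : NonemptyCompacts X :=
    ⟨⟨cut (E i) lam, ((hE i).1.1.isClosed_cut lam).isCompact⟩,
      cut_nonempty_of_mem_Feq (hE i).1 le_rfl⟩
  refine ⟨m, topCut, fun i => ⟨mem_univ _, (hdist (hE i).1 (K i)).trans_lt (hE i).2.1, ?_⟩⟩
  have hcut : ((hyper T hT)^[a i * m] (topCut i) : Set X) = cut ((zadeh T)^[a i * m] (E i)) lam :=
    (coe_hyper_iterate hT _ _).trans (cut_zadeh_iterate hT (hE i).1.1 hlam.1 _).symm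
  rw [← iterate_mul, Metric.NonemptyCompacts.dist_eq, hcut]
  have hlt := (hE i).2.2
  rw [← iterate_mul] at hlt
  exact (hdist (zadeh_iterate_mem_Feq hT hlam.1 (hE i).1 _) (L i)).trans_lt hlt

section Approximation

/-- A finite set `s` such that `s ∩ cut A α` is a `δ`-net of `cut A α` for every `α`: each point has
within distance `δ` a point of `s` at which `A` is at least as large. -/
def IsCutNet [PseudoMetricSpace X] (A : X → ℝ) (δ : ℝ) (s : Finset X) : Prop :=
  ∀ x, ∃ p ∈ s, A x ≤ A p ∧ dist x p ≤ δ

lemma exists_isCutNet [PseudoMetricSpace X] [CompactSpace X] {A : X → ℝ}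
    (hA : UpperSemicontinuous A) {δ : ℝ} (hδ : 0 < δ) : ∃ s, IsCutNet A δ s := by
  obtain ⟨t, -, htfin, hcover⟩ :=
    finite_cover_balls_of_compact (isCompact_univ (X := X)) (half_pos hδ)
  have exists_max (c : X) : ∃ p ∈ closedBall c (δ / 2), IsMaxOn A (closedBall c (δ / 2)) p :=
    UpperSemicontinuousOn.exists_isMaxOn (nonempty_closedBall.2 (half_pos hδ).le)
      isClosed_closedBall.isCompact (hA.upperSemicontinuousOn _)
  choose p hp hmax using exists_max
  refine ⟨htfin.toFinset.image p, fun x => ?_⟩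
  obtain ⟨c, hc, hxc⟩ := mem_iUnion₂.1 (hcover (mem_univ x))
  refine ⟨p c, Finset.mem_image_of_mem p (htfin.mem_toFinset.2 hc),
    hmax c (ball_subset_closedBall hxc), ?_⟩
  calc dist x (p c) ≤ dist x c + dist (p c) c := dist_triangle_right _ _ _
    _ ≤ δ / 2 + δ / 2 := add_le_add (mem_ball.1 hxc).le (mem_closedBall.1 (hp c))
    _ = δ := add_halves δ

lemma hausdorffDist_image_le_two_mul [PseudoMetricSpace X] {ι : Type*} {f g : ι → X} {J : Set ι}
    {K : Set X} {δ : ℝ} (hδ : 0 ≤ δ) (hfg : ∀ j ∈ J, dist (f j) (g j) ≤ δ) (hgK : MapsTo g J K)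
    (hnet : ∀ x ∈ K, ∃ j ∈ J, dist x (g j) ≤ δ) : hausdorffDist (f '' J) K ≤ 2 * δ := by
  refine hausdorffDist_le_of_mem_dist (by positivity) (forall_mem_image.2 fun j hj => ?_) ?_
  · exact ⟨g j, hgK hj, (hfg j hj).trans (by linarith)⟩
  · intro x hx
    obtain ⟨j, hj, hxj⟩ := hnet x hx
    refine ⟨f j, mem_image_of_mem f hj, ?_⟩
    linarith [dist_triangle_right x (f j) (g j), hfg j hj]

lemma IsCutNet.exists_mem_le [PseudoMetricSpace X] {A : X → ℝ} {s : Finset X} {δ lam : ℝ}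
    (hs : IsCutNet A δ s) (hA : A ∈ Feq X lam) : ∃ p ∈ s, lam ≤ A p :=
  let ⟨x, hx⟩ := hA.2.1
  let ⟨p, hp, hxp, _⟩ := hs x
  ⟨p, hp, hx.ge.trans hxp⟩

/-- The product fuzzy set `(x, y) ↦ min (A x) (B y)` restricted to the finite set `s × t`, on which
continuity and semicontinuity hold automatically. -/
def prodFuzzy (A B : X → ℝ) (s t : Finset X) : ↥(s ×ˢ t) → ℝ :=
  fun p => min (A p.1.1) (B p.1.2)

variable {A B : X → ℝ} {s t : Finset X} {δ lam : ℝ}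

lemma mem_cut_prodFuzzy {α : ℝ} {p : ↥(s ×ˢ t)} :
    p ∈ cut (prodFuzzy A B s t) α ↔ p.1.1 ∈ cut A α ∧ p.1.2 ∈ cut B α := by
  simp only [cut, prodFuzzy, mem_ofPred_eq, le_min_iff]

lemma prodFuzzy_mem_Feq [TopologicalSpace X] [T1Space X] (hA : A ∈ Feq X lam) (hB : B ∈ Feq X lam)
    (hs : ∃ p ∈ s, lam ≤ A p) (ht : ∃ q ∈ t, lam ≤ B q) :
    prodFuzzy A B s t ∈ Feq ↥(s ×ˢ t) lam := by
  have hle (p : ↥(s ×ˢ t)) : prodFuzzy A B s t p ≤ lam := (min_le_left _ _).trans (hA.2.2 _)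
  obtain ⟨p, hps, hp⟩ := hs
  obtain ⟨q, hqt, hq⟩ := ht
  refine ⟨⟨fun p => ⟨le_min (hA.1.1 _).1 (hB.1.1 _).1, (min_le_left _ _).trans (hA.1.1 _).2⟩,
    continuous_of_discreteTopology.upperSemicontinuous⟩, ?_, hle⟩
  exact ⟨⟨(p, q), Finset.mk_mem_product hps hqt⟩, (hle _).antisymm (le_min hp hq)⟩

lemma IsCutNet.exists_mem_cut_prodFuzzy_dist_fst_le [PseudoMetricSpace X] (hs : IsCutNet A δ s)
    (ht : ∃ q ∈ t, lam ≤ B q) {α : ℝ} (hα : α ≤ lam) {x : X} (hx : x ∈ cut A α) :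
    ∃ p ∈ cut (prodFuzzy A B s t) α, dist x p.1.1 ≤ δ := by
  obtain ⟨p, hps, hp, hxp⟩ := hs x
  obtain ⟨q, hqt, hq⟩ := ht
  exact ⟨⟨(p, q), Finset.mk_mem_product hps hqt⟩,
    mem_cut_prodFuzzy.2 ⟨hx.trans hp, hα.trans hq⟩, hxp⟩

lemma IsCutNet.exists_mem_cut_prodFuzzy_dist_snd_le [PseudoMetricSpace X] (ht : IsCutNet B δ t)
    (hs : ∃ p ∈ s, lam ≤ A p) {α : ℝ} (hα : α ≤ lam) {y : X} (hy : y ∈ cut B α) :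
    ∃ p ∈ cut (prodFuzzy A B s t) α, dist y p.1.2 ≤ δ := by
  obtain ⟨p, hps, hp⟩ := hs
  obtain ⟨q, hqt, hq, hyq⟩ := ht y
  exact ⟨⟨(p, q), Finset.mk_mem_product hps hqt⟩,
    mem_cut_prodFuzzy.2 ⟨hα.trans hp, hy.trans hq⟩, hyq⟩

variable [MetricSpace X] [CompactSpace X] {T : X → X}

lemma exists_mem_Feq_dinf_le (hT : Continuous T) (hlam : 0 < lam) (hA : A ∈ Feq X lam)
    (hB : B ∈ Feq X lam) (hδ : 0 ≤ δ) (hs : IsCutNet A δ s) (ht : IsCutNet B δ t) {k : ℕ}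
    (hk : ∀ p ∈ s ×ˢ t, k ∈ hitTimes T (ball p.1 δ) (ball p.2 δ)) :
    ∃ E ∈ Feq X lam, dinf E A ≤ 2 * δ ∧ dinf ((zadeh T)^[k] E) B ≤ 2 * δ := by
  choose z hz hkz using fun p : ↥(s ×ˢ t) => hk p.1 p.2
  have hz_cont : Continuous z := continuous_of_discreteTopology
  have hsA := hs.exists_mem_le hA
  have htB := ht.exists_mem_le hB
  have hprod := prodFuzzy_mem_Feq hA hB hsA htB
  have hE := zadehMap_mem_Feq hz_cont hlam hprod
  refine ⟨_, hE, dinf_le_of_mem_Feq hlam hE hA fun α hα => ?_,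
    dinf_le_of_mem_Feq hlam (zadeh_iterate_mem_Feq hT hlam hE k) hB fun α hα => ?_⟩
  · rw [cut_zadehMap hz_cont hprod.1.2 hα.1]
    exact hausdorffDist_image_le_two_mul hδ (fun p _ => (mem_ball.1 (hz p)).le)
      (fun p hp => (mem_cut_prodFuzzy.1 hp).1)
      fun x hx => hs.exists_mem_cut_prodFuzzy_dist_fst_le htB hα.2 hx
  · rw [cut_zadeh_iterate hT hE.1 hα.1, cut_zadehMap hz_cont hprod.1.2 hα.1, ← image_comp]
    exact hausdorffDist_image_le_two_mul hδ (fun p _ => (mem_ball.1 (hkz p)).le)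
      (fun p hp => (mem_cut_prodFuzzy.1 hp).2)
      fun y hy => ht.exists_mem_cut_prodFuzzy_dist_snd_le hsA hα.2 hy

lemma MultiTransTop.multiTransOn_zadeh {n : ℕ} {a : Fin n → ℕ} (h : MultiTransTop a T)
    (hT : Continuous T) (hmix : TopWeakMix T) (hlam : 0 < lam) :
    MultiTransOn a dinf (zadeh T) (Feq X lam) := by
  intro A hA B hB ε hε
  obtain ⟨δ, hδ, hδε⟩ : ∃ δ > 0, 2 * δ < ε := ⟨ε / 4, by positivity, by linarith⟩
  choose s hs using fun i => exists_isCutNet (hA i).1.2 hδ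
  choose t ht using fun i => exists_isCutNet (hB i).1.2 hδ
  have hne (i : Fin n) : (s i ×ˢ t i).Nonempty :=
    let ⟨p, hp, _⟩ := (hs i).exists_mem_le (hA i)
    let ⟨q, hq, _⟩ := (ht i).exists_mem_le (hB i)
    ⟨(p, q), Finset.mk_mem_product hp hq⟩
  obtain ⟨m, hm⟩ := h.exists_forall_finset_mem_hitTimes hT hmix
    (U := fun p : X × X => ball p.1 δ) (V := fun p => ball p.2 δ) (fun _ => isOpen_ball)
    (fun _ => isOpen_ball) (fun _ => nonempty_ball.2 hδ) (fun _ => nonempty_ball.2 hδ) hne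
  choose E hE hEA hEB using
    fun i => exists_mem_Feq_dinf_le hT hlam (hA i) (hB i) hδ.le (hs i) (ht i) (hm i)
  refine ⟨m, E, fun i => ⟨hE i, (hEA i).trans_lt hδε, ?_⟩⟩
  rw [← iterate_mul]
  exact (hEB i).trans_lt hδε

end Approximation

theorem multiTrans_tfae_general {X : Type*} [MetricSpace X] [CompactSpace X] (T : X → X)
    (hT : Continuous T) {n : ℕ} (hn : 0 < n) (a : Fin n → ℕ) :
    List.TFAE
      [TopWeakMix T ∧ MultiTransTop a T,
       MultiTransTop a (hyper T hT),
       ∀ lam ∈ Set.Ioc (0:ℝ) 1, MultiTransOn a dinf (zadeh T) (Feq X lam),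
       ∃ lam ∈ Set.Ioc (0:ℝ) 1, MultiTransOn a dinf (zadeh T) (Feq X lam)] := by
  tfae_have 1 → 3 := fun ⟨hmix, htrans⟩ _ hlam => htrans.multiTransOn_zadeh hT hmix hlam.1
  tfae_have 3 → 4 := fun h => ⟨1, by simp, h 1 (by simp)⟩
  tfae_have 4 → 2 := fun ⟨_, hlam, h⟩ => multiTransTop_hyper_of_multiTransOn_zadeh hT hlam h
  tfae_have 2 → 1 := fun h => ⟨.of_multiTransTop_hyper hT hn h, .of_hyper hT h⟩
  tfae_finish

/-- For a vector `𝐚 = (a₁, …, a_n)` of positive integers: `(X,T)` is weakly mixing and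
`𝐚`-transitive iff `(K(X), T_K)` is `𝐚`-transitive iff the Zadeh extension on every
(equivalently, some) `𝔽^{=λ}(X)` is `𝐚`-transitive. -/
theorem multiTrans_tfae {X : Type*} [MetricSpace X] [CompactSpace X] [Nontrivial X]
    (T : X → X) (hT : Continuous T) (hTs : Function.Surjective T)
    {n : ℕ} (hn : 0 < n) (a : Fin n → ℕ) (ha : ∀ i, 0 < a i) :
    List.TFAE
      [TopWeakMix T ∧ MultiTransTop a T,
       MultiTransTop a (hyper T hT),
       ∀ lam ∈ Set.Ioc (0:ℝ) 1, MultiTransOn a dinf (zadeh T) (Feq X lam),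
       ∃ lam ∈ Set.Ioc (0:ℝ) 1, MultiTransOn a dinf (zadeh T) (Feq X lam)] := by
  exact multiTrans_tfae_general T hT hn a
end
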